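/- Let S be a set of n ≥ 3 points in ℝ² with no three points collinear, and let T be a triangulation of S. Then for every pair of distinct points u, v ∈ S there is a monotone path in T whose endpoints are u and v; consequently, T contains at least n(n−1)/2 monotone paths. -/

import Mathlib

open scoped BigOperators

noncomputable section

/-- Points of the plane. -/
abbrev Pt : Type := ℝ × ℝ

/-- Dot product on the plane. -/
def dotp (a b : Pt) : ℝ := a.1 * b.1 + a.2 * b.2

/-- The geometric conditions making `(V, E)` a plane straight-line graph:
every edge joins two distinct points of `V`, no point of `V` lies in the open
segment of an edge, and the open segments of two distinct edges are disjoint. -/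
def ValidEdges (V : Finset Pt) (E : Finset (Sym2 Pt)) : Prop :=
  (∀ a b : Pt, s(a, b) ∈ E → a ∈ V ∧ b ∈ V ∧ a ≠ b) ∧
  (∀ a b : Pt, s(a, b) ∈ E → ∀ v ∈ V, v ∉ openSegment ℝ a b) ∧
  (∀ a b c d : Pt, s(a, b) ∈ E → s(c, d) ∈ E → s(a, b) ≠ s(c, d) →
    openSegment ℝ a b ∩ openSegment ℝ c d = ∅)

/-- A plane straight-line graph. -/
structure PSLG where
  V : Finset Pt
  E : Finset (Sym2 Pt)
  valid : ValidEdges V E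

/-- A path in `G`: a sequence of at least two vertices, consecutive ones joined by edges. -/
def IsPathIn (G : PSLG) (L : List Pt) : Prop :=
  2 ≤ L.length ∧ L.Chain' (fun a b => s(a, b) ∈ G.E)

/-- An x-monotone path: x-coordinates strictly increasing along the path. -/
def IsXMonotonePath (G : PSLG) (L : List Pt) : Prop :=
  IsPathIn G L ∧ L.Chain' (fun a b => a.1 < b.1)

/-- Monotonicity of a vertex sequence in direction `u`. -/
def MonotoneInDir (u : Pt) (L : List Pt) : Prop :=
  L.Chain' (fun a b => 0 < dotp (b - a) u)

/-- A monotone path: monotone in some direction `u ≠ 0`. -/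
def IsMonotonePath (G : PSLG) (L : List Pt) : Prop :=
  IsPathIn G L ∧ ∃ u : Pt, u ≠ 0 ∧ MonotoneInDir u L

/-- The number of x-monotone paths in `G`. -/
def xMonCount (G : PSLG) : ℕ := Set.ncard {L : List Pt | IsXMonotonePath G L}

/-- The number of monotone paths in `G`, a path and its reversal counted once. -/
def monPathCount (G : PSLG) : ℕ :=
  Set.ncard {P : Set (List Pt) | ∃ L, IsMonotonePath G L ∧ P = {L, L.reverse}}

/-- Consecutive pairs along a cycle (including the wrap-around pair). -/
def cyclePairs (L : List Pt) : List (Pt × Pt) := L.zip (L.rotate 1)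

/-- A cycle in `G`: at least 3 pairwise distinct vertices, cyclically joined by edges. -/
def IsCycleIn (G : PSLG) (L : List Pt) : Prop :=
  3 ≤ L.length ∧ L.Nodup ∧ ∀ p ∈ cyclePairs L, s(p.1, p.2) ∈ G.E

/-- The union of the closed edge segments of a cycle. -/
def cycleBody (L : List Pt) : Set Pt := ⋃ p ∈ cyclePairs L, segment ℝ p.1 p.2

/-- A star-shaped polygon in `G`: a cycle for which some point `o` sees the boundary
in exactly one point along every ray emanating from `o`. -/
def IsStarShapedPolygon (G : PSLG) (L : List Pt) : Prop :=
  IsCycleIn G L ∧ ∃ o : Pt, ∀ d : Pt, d ≠ 0 →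
    ∃! p : Pt, p ∈ cycleBody L ∧ ∃ t : ℝ, 0 ≤ t ∧ p = o + t • d

/-- The edge set of a cycle, used to count polygons. -/
def cycleEdgeSet (L : List Pt) : Finset (Sym2 Pt) :=
  ((cyclePairs L).map (fun p => s(p.1, p.2))).toFinset

/-- The number of star-shaped polygons in `G`, counted by edge sets. -/
def starCount (G : PSLG) : ℕ :=
  Set.ncard {E' : Finset (Sym2 Pt) | ∃ L, IsStarShapedPolygon G L ∧ E' = cycleEdgeSet L}

/-- Cross product (signed area). -/
def crossp (a b : Pt) : ℝ := a.1 * b.2 - a.2 * b.1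

/-- A convex polygon in `G`: a cycle whose vertices are in strictly convex position and
appear along the cycle in their convex-hull cyclic order; equivalently, for every directed
edge of the cycle all other vertices lie strictly on the same (left or right) side. -/
def IsConvexPolygon (G : PSLG) (L : List Pt) : Prop :=
  IsCycleIn G L ∧
  ((∀ p ∈ cyclePairs L, ∀ v ∈ L, v ≠ p.1 → v ≠ p.2 → 0 < crossp (p.2 - p.1) (v - p.1)) ∨
   (∀ p ∈ cyclePairs L, ∀ v ∈ L, v ≠ p.1 → v ≠ p.2 → crossp (p.2 - p.1) (v - p.1) < 0))

/-- The number of convex polygons in `G`, counted by edge sets. -/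
def convexCount (G : PSLG) : ℕ :=
  Set.ncard {E' : Finset (Sym2 Pt) | ∃ L, IsConvexPolygon G L ∧ E' = cycleEdgeSet L}

/-- A triangulation: an edge-maximal plane straight-line graph. -/
def PSLG.IsTriangulation (G : PSLG) : Prop :=
  ∀ a ∈ G.V, ∀ b ∈ G.V, a ≠ b → s(a, b) ∉ G.E → ¬ ValidEdges G.V (insert s(a, b) G.E)

/-- An orientation of a PSLG: each edge `{a, b}` receives exactly one of the ordered
pairs `(a, b)`, `(b, a)`. -/
def IsOrientation (G : PSLG) (D : Finset (Pt × Pt)) : Prop :=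
  (∀ p ∈ D, s(p.1, p.2) ∈ G.E) ∧
  ∀ a b : Pt, s(a, b) ∈ G.E →
    (((a, b) ∈ D ∧ (b, a) ∉ D) ∨ ((b, a) ∈ D ∧ (a, b) ∉ D))

/-- A directed simple path in a directed graph on points. -/
def IsDirPath (D : Finset (Pt × Pt)) (L : List Pt) : Prop :=
  2 ≤ L.length ∧ L.Nodup ∧ L.Chain' (fun a b => (a, b) ∈ D)

/-- The number of directed simple paths. -/
def dirPathCount (D : Finset (Pt × Pt)) : ℕ := Set.ncard {L : List Pt | IsDirPath D L}

/-- No three of the points of `S` are collinear. -/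
def NoThreeCollinear (S : Finset Pt) : Prop :=
  ∀ p ∈ S, ∀ q ∈ S, ∀ r ∈ S, p ≠ q → p ≠ r → q ≠ r → ¬ Collinear ℝ ({p, q, r} : Set Pt)

/-- A maximal monotone path: not a proper subpath (up to reversal) of another
monotone path of `G`. -/
def IsMaximalMonotonePath (G : PSLG) (L : List Pt) : Prop :=
  IsMonotonePath G L ∧ ∀ M : List Pt, IsMonotonePath G M →
    (L <:+: M ∨ L.reverse <:+: M) → (L = M ∨ L.reverse = M)

theorem dotp_sub (a b w : Pt) : dotp (a - b) w = dotp a w - dotp b w := by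
  simp only [dotp, Prod.fst_sub, Prod.snd_sub]; ring

theorem mem_openSegment_iff_exists {a b m : Pt} :
    m ∈ openSegment ℝ a b ↔ ∃ θ : ℝ, 0 < θ ∧ θ < 1 ∧ m = a + θ • (b - a) := by
  rw [openSegment_eq_image']
  constructor
  · rintro ⟨θ, ⟨h0, h1⟩, rfl⟩; exact ⟨θ, h0, h1, rfl⟩
  · rintro ⟨θ, h0, h1, rfl⟩; exact ⟨θ, ⟨h0, h1⟩, rfl⟩

theorem NoThreeCollinear.crossp_ne_zero {S : Finset Pt} (hS : NoThreeCollinear S) {p q r : Pt}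
    (hp : p ∈ S) (hq : q ∈ S) (hr : r ∈ S) (hpq : p ≠ q) (hpr : p ≠ r) (hqr : q ≠ r) :
    crossp (q - p) (r - p) ≠ 0 := by
  intro h
  apply hS p hp q hq r hr hpq hpr hqr
  rw [collinear_iff_of_mem (p₀ := p) (by simp)]
  have hd : 0 < (q - p).1 ^ 2 + (q - p).2 ^ 2 := by
    by_contra hcon
    have h1 : (q - p).1 = 0 := by nlinarith [sq_nonneg (q - p).1, sq_nonneg (q - p).2]
    have h2 : (q - p).2 = 0 := by nlinarith [sq_nonneg (q - p).1, sq_nonneg (q - p).2]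
    exact hpq (sub_eq_zero.mp (Prod.ext h1 h2)).symm
  refine ⟨q - p, fun s hs => ?_⟩
  rcases hs with rfl | rfl | rfl
  · exact ⟨0, by simp⟩
  · exact ⟨1, by simp⟩
  · refine ⟨dotp (s - p) (q - p) / ((q - p).1 ^ 2 + (q - p).2 ^ 2), ?_⟩
    simp only [crossp, Prod.fst_sub, Prod.snd_sub] at h hd
    ext
    · simp only [dotp, vadd_eq_add, Prod.fst_add, Prod.smul_fst, Prod.fst_sub, Prod.snd_sub,
        smul_eq_mul]
      field_simp
      linear_combination (p.2 - q.2) * h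
    · simp only [dotp, vadd_eq_add, Prod.snd_add, Prod.smul_snd, Prod.fst_sub, Prod.snd_sub,
        smul_eq_mul]
      field_simp
      linear_combination (q.1 - p.1) * h

/-- Two edges that are not the same have no common relatively interior point. -/
theorem PSLG.eq_of_mem_openSegment (G : PSLG) {a b c d m : Pt} (hab : s(a, b) ∈ G.E)
    (hcd : s(c, d) ∈ G.E) (h1 : m ∈ openSegment ℝ a b) (h2 : m ∈ openSegment ℝ c d) :
    s(a, b) = s(c, d) := by
  by_contra hne
  have := G.valid.2.2 a b c d hab hcd hne
  exact Set.notMem_empty m (this ▸ ⟨h1, h2⟩)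

/-- In a triangulation, every segment that is not an edge is crossed by an edge. -/
theorem PSLG.IsTriangulation.exists_crossing {G : PSLG} (htri : G.IsTriangulation)
    (hgen : NoThreeCollinear G.V) {a b : Pt} (ha : a ∈ G.V) (hb : b ∈ G.V) (hab : a ≠ b)
    (hE : s(a, b) ∉ G.E) :
    ∃ c d m, s(c, d) ∈ G.E ∧ m ∈ openSegment ℝ a b ∧ m ∈ openSegment ℝ c d := by
  by_contra! hcon
  have hsym : ∀ {c d : Pt}, s(c, d) = s(a, b) → openSegment ℝ c d = openSegment ℝ a b := by
    intro c d h
    rcases Sym2.eq_iff.mp h with ⟨rfl, rfl⟩ | ⟨rfl, rfl⟩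
    · rfl
    · exact openSegment_symm ℝ _ _
  have hdisj : ∀ c d, s(c, d) ∈ G.E → openSegment ℝ a b ∩ openSegment ℝ c d = ∅ := by
    intro c d hcd
    exact Set.eq_empty_iff_forall_notMem.mpr fun m hm => hcon c d m hcd hm.1 hm.2
  refine htri a ha b hb hab hE ⟨?_, ?_, ?_⟩
  · intro c d h
    rcases Finset.mem_insert.mp h with h | h
    · rcases Sym2.eq_iff.mp h with ⟨rfl, rfl⟩ | ⟨rfl, rfl⟩
      · exact ⟨ha, hb, hab⟩
      · exact ⟨hb, ha, hab.symm⟩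
    · exact G.valid.1 c d h
  · intro c d h v hv
    rcases Finset.mem_insert.mp h with h | h
    · rw [hsym h, mem_openSegment_iff_exists]
      rintro ⟨θ, h0, h1, rfl⟩
      have hne : b - a ≠ 0 := sub_ne_zero.mpr hab.symm
      refine hgen.crossp_ne_zero ha hb hv hab ?_ ?_ ?_
      · intro h; exact smul_ne_zero h0.ne' hne (left_eq_add.mp h)
      · intro h
        have : (1 - θ) • (b - a) = 0 := by
          rw [sub_smul, one_smul, sub_eq_zero]
          exact sub_eq_iff_eq_add'.mpr h
        exact smul_ne_zero (sub_pos.mpr h1).ne' hne this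
      · simp [crossp]; ring
    · exact G.valid.2.1 c d h v hv
  · intro c d e f h1 h2 hne
    rcases Finset.mem_insert.mp h1 with h1 | h1 <;> rcases Finset.mem_insert.mp h2 with h2 | h2
    · exact absurd (h1.trans h2.symm) hne
    · rw [hsym h1]; exact hdisj e f h2
    · rw [hsym h2, Set.inter_comm]; exact hdisj c d h1
    · exact G.valid.2.2 c d e f h1 h2 hne

/-- An edge crossing a segment that is not an edge has its endpoints strictly on both sides. -/
theorem PSLG.crossp_sides {G : PSLG} (hgen : NoThreeCollinear G.V) {a b c d m : Pt}
    (ha : a ∈ G.V) (hb : b ∈ G.V) (hab : a ≠ b) (hE : s(a, b) ∉ G.E) (hcd : s(c, d) ∈ G.E)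
    (h1 : m ∈ openSegment ℝ a b) (h2 : m ∈ openSegment ℝ c d) :
    (0 < crossp (b - a) (c - a) ∧ crossp (b - a) (d - a) < 0) ∨
      (crossp (b - a) (c - a) < 0 ∧ 0 < crossp (b - a) (d - a)) := by
  obtain ⟨hc, hd, hne⟩ := G.valid.1 c d hcd
  obtain ⟨μ, -, -, hμ⟩ := mem_openSegment_iff_exists.mp h1
  obtain ⟨θ, h0, h1', hθ⟩ := mem_openSegment_iff_exists.mp h2
  have key : (1 - θ) * crossp (b - a) (c - a) + θ * crossp (b - a) (d - a) = 0 := by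
    have e1 := congrArg Prod.fst (hμ.symm.trans hθ)
    have e2 := congrArg Prod.snd (hμ.symm.trans hθ)
    simp [crossp] at e1 e2 ⊢
    linear_combination (b.2 - a.2) * e1 - (b.1 - a.1) * e2
  have hend : ∀ {x : Pt}, x ∈ G.V → crossp (b - a) (x - a) = 0 → x = a ∨ x = b := by
    intro x hx h
    by_contra! hcon
    exact hgen.crossp_ne_zero ha hb hx hab hcon.1.symm hcon.2.symm h
  rcases lt_trichotomy (crossp (b - a) (c - a)) 0 with h | h | h
  · right; exact ⟨h, by by_contra! h'; nlinarith⟩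
  · exfalso
    have h' : crossp (b - a) (d - a) = 0 := by
      rw [h, mul_zero, zero_add] at key
      exact (mul_eq_zero.mp key).resolve_left h0.ne'
    rcases hend hc h with rfl | rfl <;> rcases hend hd h' with rfl | rfl
    · exact hne rfl
    · exact hE hcd
    · exact hE (Sym2.eq_swap ▸ hcd)
    · exact hne rfl
  · left; exact ⟨h, by by_contra! h'; nlinarith⟩

/-- `a → b` is an edge along which the height in direction `w` strictly increases. -/
def UpEdge (G : PSLG) (w a b : Pt) : Prop := s(a, b) ∈ G.E ∧ dotp a w < dotp b w

/-- Let `(a₀, b₀)` lie in the open triangle `0 < b, 0 ≤ a, a + b < 1` on the ray through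
`(α, β)`. A segment leaving it towards a point `(A, B)` on the positive side of that ray, outside
the triangle, leaves the triangle through one of the sides `b = 0` and `a + b = 1`. -/
theorem exists_exit_of_triangle {a₀ b₀ α β A B : ℝ} (hβ : 0 < β) (hα : 0 ≤ α)
    (hray : a₀ * β = b₀ * α) (hb₀ : 0 < b₀) (hsum : a₀ + b₀ < 1) (hpos : 0 < A * β - B * α)
    (hout : ¬ (0 ≤ B ∧ A + B ≤ 1)) :
    ∃ τ : ℝ, 0 < τ ∧ τ < 1 ∧
      ((b₀ + τ * (B - b₀) = 0 ∧ 0 < a₀ + τ * (A - a₀) ∧ a₀ + τ * (A - a₀) ≤ 1) ∨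
        (0 < b₀ + τ * (B - b₀) ∧ 0 < a₀ + τ * (A - a₀) ∧
          a₀ + τ * (A - a₀) + (b₀ + τ * (B - b₀)) = 1)) := by
  have hline : ∀ τ, 0 < τ → 0 < (a₀ + τ * (A - a₀)) * β - (b₀ + τ * (B - b₀)) * α := by
    intro τ hτ
    have : (a₀ + τ * (A - a₀)) * β - (b₀ + τ * (B - b₀)) * α = τ * (A * β - B * α) := by
      linear_combination (1 - τ) * hray
    rw [this]; exact mul_pos hτ hpos
  have hapos : ∀ τ, 0 < τ → 0 ≤ b₀ + τ * (B - b₀) → 0 < a₀ + τ * (A - a₀) := by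
    intro τ hτ hb
    have h1 := hline τ hτ
    have h2 := mul_nonneg hb hα
    exact pos_of_mul_pos_left (by linarith : 0 < (a₀ + τ * (A - a₀)) * β) hβ.le
  have hcross : ∀ T, 0 < T → T ≤ 1 → 1 < a₀ + T * (A - a₀) + (b₀ + T * (B - b₀)) →
      0 ≤ b₀ + T * (B - b₀) → ∃ τ : ℝ, 0 < τ ∧ τ < 1 ∧
        (0 < b₀ + τ * (B - b₀) ∧ 0 < a₀ + τ * (A - a₀) ∧
          a₀ + τ * (A - a₀) + (b₀ + τ * (B - b₀)) = 1) := by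
    intro T hT hT1 hS hb
    set S := a₀ + T * (A - a₀) + (b₀ + T * (B - b₀)) with hSdef
    have hS0 : 0 < S - (a₀ + b₀) := by linarith
    set ρ := (1 - (a₀ + b₀)) / (S - (a₀ + b₀)) with hρ
    have hρ0 : 0 < ρ := div_pos (by linarith) hS0
    have hρ1 : ρ < 1 := (div_lt_one hS0).mpr (by linarith)
    have hρeq : ρ * (S - (a₀ + b₀)) = 1 - (a₀ + b₀) := div_mul_cancel₀ _ hS0.ne'
    have hτ0 : 0 < ρ * T := mul_pos hρ0 hT
    have hbτ : 0 < b₀ + ρ * T * (B - b₀) := by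
      have : b₀ + ρ * T * (B - b₀) = (1 - ρ) * b₀ + ρ * (b₀ + T * (B - b₀)) := by ring
      rw [this]
      have := mul_pos (sub_pos.mpr hρ1) hb₀
      have := mul_nonneg hρ0.le hb
      linarith
    refine ⟨ρ * T, hτ0, by nlinarith, hbτ, hapos _ hτ0 hbτ.le, ?_⟩
    rw [hSdef] at hρeq
    linear_combination hρeq
  rcases lt_or_ge B 0 with hB | hB
  · have hd : 0 < b₀ - B := by linarith
    set τ := b₀ / (b₀ - B) with hτ
    have hτ0 : 0 < τ := div_pos hb₀ hd
    have hτ1 : τ < 1 := (div_lt_one hd).mpr (by linarith)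
    have hz : b₀ + τ * (B - b₀) = 0 := by
      have : τ * (b₀ - B) = b₀ := div_mul_cancel₀ _ hd.ne'
      linarith
    by_cases h1 : a₀ + τ * (A - a₀) ≤ 1
    · exact ⟨τ, hτ0, hτ1, Or.inl ⟨hz, hapos τ hτ0 hz.ge, h1⟩⟩
    · obtain ⟨τ', h0, h1, h2⟩ := hcross τ hτ0 hτ1.le (by rw [hz]; linarith) hz.ge
      exact ⟨τ', h0, h1, Or.inr h2⟩
  · have hS : 1 < A + B := by by_contra! h; exact hout ⟨hB, h⟩
    obtain ⟨τ', h0, h1, h2⟩ := hcross 1 one_pos le_rfl (by linarith) (by linarith)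
    exact ⟨τ', h0, h1, Or.inr h2⟩

/-- A crossed segment has a first crossing point. -/
theorem PSLG.exists_first_crossing {G : PSLG} (hgen : NoThreeCollinear G.V) {x y : Pt}
    (hx : x ∈ G.V) (hy : y ∈ G.V) (hxy : x ≠ y) (hE : s(x, y) ∉ G.E)
    (hcross : ∃ c d m, s(c, d) ∈ G.E ∧ m ∈ openSegment ℝ x y ∧ m ∈ openSegment ℝ c d) :
    ∃ t : ℝ, 0 < t ∧ t < 1 ∧
      (∃ c d, s(c, d) ∈ G.E ∧ x + t • (y - x) ∈ openSegment ℝ c d) ∧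
      ∀ t' : ℝ, 0 < t' → t' < 1 →
        (∃ c d, s(c, d) ∈ G.E ∧ x + t' • (y - x) ∈ openSegment ℝ c d) → t ≤ t' := by
  set T : Set ℝ := {t | 0 < t ∧ t < 1 ∧
    ∃ c d, s(c, d) ∈ G.E ∧ x + t • (y - x) ∈ openSegment ℝ c d} with hT
  have hfin : T.Finite := by
    refine ((G.V ×ˢ G.V).finite_toSet.image fun p : Pt × Pt =>
      crossp (p.1 - x) (p.2 - p.1) / crossp (y - x) (p.2 - p.1)).subset ?_
    rintro t ⟨h0, h1, c, d, hcd, hm⟩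
    have hv := G.valid.1 c d hcd
    refine ⟨(c, d), by simp [hv.1, hv.2.1], ?_⟩
    have hs := G.crossp_sides hgen hx hy hxy hE hcd
      (mem_openSegment_iff_exists.mpr ⟨t, h0, h1, rfl⟩) hm
    have hne : crossp (y - x) (d - c) ≠ 0 := by
      have : crossp (y - x) (d - c) = crossp (y - x) (d - x) - crossp (y - x) (c - x) := by
        simp [crossp]; ring
      rw [this]
      rcases hs with hs | hs
      · linarith
      · exact (sub_pos.mpr (hs.1.trans hs.2)).ne'
    obtain ⟨θ, -, -, hθ⟩ := mem_openSegment_iff_exists.mp hm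
    have e1 := congrArg Prod.fst hθ
    have e2 := congrArg Prod.snd hθ
    rw [div_eq_iff hne]
    simp [crossp] at e1 e2 ⊢
    linear_combination (c.2 - d.2) * e1 - (c.1 - d.1) * e2
  have hne : T.Nonempty := by
    obtain ⟨c, d, m, hcd, hm, hm'⟩ := hcross
    obtain ⟨t, h0, h1, rfl⟩ := mem_openSegment_iff_exists.mp hm
    exact ⟨t, h0, h1, c, d, hcd, hm'⟩
  obtain ⟨t, ht, hmin⟩ := T.exists_min_image id hfin hne
  exact ⟨t, ht.1, ht.2.1, ht.2.2, fun t' h0 h1 h => hmin t' ⟨h0, h1, h⟩⟩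

/-- In a triangulation, every vertex that is not highest has an edge going up. -/
theorem PSLG.IsTriangulation.exists_upEdge {G : PSLG} (htri : G.IsTriangulation)
    (hgen : NoThreeCollinear G.V) {w x y : Pt} (hx : x ∈ G.V) (hy : y ∈ G.V)
    (hxy : dotp x w < dotp y w) : ∃ z, UpEdge G w x z := by
  have hne : x ≠ y := by rintro rfl; exact lt_irrefl _ hxy
  by_cases hE : s(x, y) ∈ G.E
  · exact ⟨y, hE, hxy⟩
  obtain ⟨t, ht0, ht1, ⟨c', d', hcd', hq'⟩, hmin⟩ := G.exists_first_crossing hgen hx hy hne hE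
    (htri.exists_crossing hgen hx hy hne hE)
  obtain ⟨q, hq⟩ : ∃ q, q = x + t • (y - x) := ⟨_, rfl⟩
  rw [← hq] at hq'
  have hqw : dotp x w < dotp q w := by
    have : dotp q w = dotp x w + t * (dotp y w - dotp x w) := by
      rw [hq]; simp [dotp]; ring
    have := mul_pos ht0 (sub_pos.mpr hxy)
    linarith
  obtain ⟨c, d, hcd, hqcd, hcw⟩ : ∃ c d, s(c, d) ∈ G.E ∧ q ∈ openSegment ℝ c d ∧
      dotp x w < dotp c w := by
    by_cases h : dotp x w < dotp c' w
    · exact ⟨c', d', hcd', hq', h⟩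
    refine ⟨d', c', Sym2.eq_swap ▸ hcd', openSegment_symm ℝ c' d' ▸ hq', ?_⟩
    obtain ⟨θ, h0, h1, hθ⟩ := mem_openSegment_iff_exists.mp hq'
    have : dotp q w = (1 - θ) * dotp c' w + θ * dotp d' w := by
      rw [hθ]; simp [dotp]; ring
    by_contra! h'
    nlinarith
  clear hcd' hq'
  obtain ⟨hcV, hdV, hcd_ne⟩ := G.valid.1 c d hcd
  have hcx : c ≠ x := by rintro rfl; exact lt_irrefl _ hcw
  obtain ⟨φ, hφ0, hφ1, hφ⟩ := mem_openSegment_iff_exists.mp hqcd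
  obtain ⟨D, hD⟩ : ∃ D, D = crossp (q - x) (c - x) := ⟨_, rfl⟩
  have hDne : D ≠ 0 := by
    have h1 : D = t * crossp (y - x) (c - x) := by rw [hD, hq]; simp [crossp]; ring
    have h2 := G.crossp_sides hgen hx hy hne hE hcd
      (mem_openSegment_iff_exists.mpr ⟨t, ht0, ht1, hq⟩) hqcd
    rw [h1]
    refine mul_ne_zero ht0.ne' ?_
    rcases h2 with h | h
    · exact h.1.ne'
    · exact h.1.ne
  -- barycentric coordinates with respect to the triangle `x q c`
  obtain ⟨α, hα⟩ : ∃ α : Pt → ℝ, ∀ s, α s = crossp (s - x) (c - x) / D := ⟨_, fun _ => rfl⟩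
  obtain ⟨β, hβ⟩ : ∃ β : Pt → ℝ, ∀ s, β s = crossp (q - x) (s - x) / D := ⟨_, fun _ => rfl⟩
  have hcoord : ∀ s, s = x + α s • (q - x) + β s • (c - x) := by
    intro s
    rw [hα, hβ]
    have hD' := hD
    simp only [crossp, Prod.fst_sub, Prod.snd_sub] at hD'
    ext
    · simp [crossp]; field_simp; rw [hD']; ring
    · simp [crossp]; field_simp; rw [hD']; ring
  have hαaff : ∀ (s r : Pt) (τ : ℝ), α (s + τ • (r - s)) = α s + τ * (α r - α s) := by
    intro s r τ; simp only [hα]; field_simp; simp [crossp]; ring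
  have hβaff : ∀ (s r : Pt) (τ : ℝ), β (s + τ • (r - s)) = β s + τ * (β r - β s) := by
    intro s r τ; simp only [hβ]; field_simp; simp [crossp]; ring
  have hαx : α x = 0 := by rw [hα]; simp [crossp]
  have hβx : β x = 0 := by rw [hβ]; simp [crossp]
  have hαc : α c = 0 := by rw [hα]; simp [crossp]; left; ring
  have hβc : β c = 1 := by rw [hβ, ← hD, div_self hDne]
  have hαq : α q = 1 := by rw [hα, ← hD, div_self hDne]
  have hβq : β q = 0 := by rw [hβ]; simp [crossp]; left; ring
  have hline : ∀ s ∈ openSegment ℝ c d, α s + β s = 1 := by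
    intro s hs
    obtain ⟨θ, -, -, rfl⟩ := mem_openSegment_iff_exists.mp hs
    have h1 : α d + β d = 1 := by
      have h := hαaff c d φ
      have h' := hβaff c d φ
      rw [← hφ] at h h'
      rw [hαq, hαc] at h
      rw [hβq, hβc] at h'
      have h3 : φ * (α d + β d - 1) = 0 := by linarith
      have := (mul_eq_zero.mp h3).resolve_left hφ0.ne'
      linarith
    rw [hαaff, hβaff, hαc, hβc]
    linear_combination θ * h1
  classical
  set C := G.V.filter fun s => s ≠ x ∧ 0 ≤ α s ∧ 0 ≤ β s ∧ α s + β s ≤ 1 with hC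
  have hcC : c ∈ C := by simp [hC, hcV, hcx, hαc, hβc]
  have hβpos : ∀ s ∈ C, 0 < β s := by
    intro s hs
    obtain ⟨hsV, hsx, h1, h2, h3⟩ := Finset.mem_filter.mp hs
    refine lt_of_le_of_ne h2 fun h0 => ?_
    have hs' : s = x + (α s * t) • (y - x) := by
      conv_lhs => rw [hcoord s, ← h0, hq]
      simp [smul_smul]
    by_cases hsy : s = y
    · have hy0 : (1 - α s * t) • (y - x) = 0 := by
        rw [sub_smul, one_smul, sub_eq_zero]
        nth_rewrite 1 [← hsy]
        nth_rewrite 1 [hs']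
        simp
      rcases smul_eq_zero.mp hy0 with h | h
      · nlinarith
      · exact hne (sub_eq_zero.mp h).symm
    · refine hgen.crossp_ne_zero hx hy hsV hne hsx.symm (Ne.symm hsy) ?_
      rw [hs']; simp [crossp]; ring
  obtain ⟨p, hpC, hpmax⟩ := C.exists_max_image (fun s => α s / β s) ⟨c, hcC⟩
  obtain ⟨hpV, hpx, hp1, -, hp3⟩ := Finset.mem_filter.mp hpC
  have hp2 := hβpos p hpC
  refine ⟨p, ?_, ?_⟩
  swap
  · have : dotp p w = dotp x w + α p * (dotp q w - dotp x w) + β p * (dotp c w - dotp x w) := by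
      conv_lhs => rw [hcoord p]
      simp [dotp]; ring
    have h1 := mul_nonneg hp1 (sub_pos.mpr hqw).le
    have h2 := mul_pos hp2 (sub_pos.mpr hcw)
    linarith
  by_contra hxp
  obtain ⟨e', f', m, hef', hmxp, hmef'⟩ := htri.exists_crossing hgen hx hpV hpx.symm hxp
  have hℓ : ∀ s, (α s * β p - β s * α p) * D = - crossp (p - x) (s - x) := by
    intro s
    rw [hα, hβ, hα, hβ]
    have hD' := hD
    simp only [crossp, Prod.fst_sub, Prod.snd_sub] at hD'
    field_simp
    simp [crossp]; rw [hD']; ring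
  obtain ⟨e, f, hef, hmef, hepos⟩ : ∃ e f, s(e, f) ∈ G.E ∧ m ∈ openSegment ℝ e f ∧
      0 < α e * β p - β e * α p := by
    have hsides := G.crossp_sides hgen hx hpV hpx.symm hxp hef' hmxp hmef'
    have h1 := hℓ e'
    have h2 := hℓ f'
    have hor : 0 < α e' * β p - β e' * α p ∨ 0 < α f' * β p - β f' * α p := by
      by_contra! hcon
      rcases lt_or_gt_of_ne hDne with hD0 | hD0
      · have := mul_nonneg_of_nonpos_of_nonpos hcon.1 hD0.le
        have := mul_nonneg_of_nonpos_of_nonpos hcon.2 hD0.le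
        rcases hsides with h | h <;> linarith
      · have := mul_nonpos_of_nonpos_of_nonneg hcon.1 hD0.le
        have := mul_nonpos_of_nonpos_of_nonneg hcon.2 hD0.le
        rcases hsides with h | h <;> linarith
    rcases hor with h | h
    · exact ⟨e', f', hef', hmef', h⟩
    · exact ⟨f', e', Sym2.eq_swap ▸ hef', openSegment_symm ℝ e' f' ▸ hmef', h⟩
  obtain ⟨μ, hμ0, hμ1, hμ⟩ := mem_openSegment_iff_exists.mp hmxp
  have hαm : α m = μ * α p := by rw [hμ, hαaff, hαx]; ring
  have hβm : β m = μ * β p := by rw [hμ, hβaff, hβx]; ring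
  have hmsum : α m + β m < 1 := by rw [hαm, hβm]; nlinarith
  have hdiff : s(e, f) ≠ s(c, d) := by
    intro h
    have : m ∈ openSegment ℝ c d := by
      rcases Sym2.eq_iff.mp h with ⟨rfl, rfl⟩ | ⟨rfl, rfl⟩
      · exact hmef
      · rwa [openSegment_symm]
    exact hmsum.ne (hline m this)
  have hout : ¬ (0 ≤ β e ∧ α e + β e ≤ 1) := by
    rintro ⟨hB, hS⟩
    have hA : 0 ≤ α e := by
      have := mul_nonneg hB hp1
      exact (pos_of_mul_pos_left (by linarith : 0 < α e * β p) hp2.le).le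
    have heC : e ∈ C := by
      refine Finset.mem_filter.mpr ⟨(G.valid.1 e f hef).1, ?_, hA, hB, hS⟩
      rintro rfl
      rw [hαx, hβx] at hepos
      simp at hepos
    have := hpmax e heC
    rw [div_le_div_iff₀ (hβpos e heC) hp2] at this
    linarith
  obtain ⟨τ, hτ0, hτ1, hτ⟩ := exists_exit_of_triangle hp2 hp1
    (by rw [hαm, hβm]; ring : α m * β p = β m * α p) (hβm ▸ mul_pos hμ0 hp2) hmsum hepos hout
  rw [← hαaff, ← hβaff] at hτ
  obtain ⟨z, hz⟩ : ∃ z, z = m + τ • (e - m) := ⟨_, rfl⟩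
  rw [← hz] at hτ
  have hzef : z ∈ openSegment ℝ e f := by
    obtain ⟨θ, h0, h1, hθ⟩ := mem_openSegment_iff_exists.mp hmef
    refine mem_openSegment_iff_exists.mpr ⟨(1 - τ) * θ, by nlinarith, by nlinarith, ?_⟩
    rw [hz, hθ]
    module
  have hzc := hcoord z
  rcases hτ with ⟨hb, ha0, ha1⟩ | ⟨hb, ha0, hS⟩
  · have hz' : z = x + (α z * t) • (y - x) := by
      conv_lhs => rw [hzc, hb, hq]
      simp [smul_smul]
    have := hmin (α z * t) (mul_pos ha0 ht0) (by nlinarith) ⟨e, f, hef, hz' ▸ hzef⟩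
    have h1 : α z = 1 := by
      refine le_antisymm ha1 ?_
      by_contra! hlt
      nlinarith
    have hzq : z = q := by rw [hz', h1, one_mul, hq]
    exact hdiff (G.eq_of_mem_openSegment hef hcd (hzq ▸ hzef) hqcd)
  · have hzcd : z ∈ openSegment ℝ c d := by
      refine mem_openSegment_iff_exists.mpr ⟨α z * φ, mul_pos ha0 hφ0, by nlinarith, ?_⟩
      have hβz : β z = 1 - α z := by linarith
      rw [hβz] at hzc
      conv_lhs => rw [hzc, hφ]
      module
    exact hdiff (G.eq_of_mem_openSegment hef hcd hzef hzcd)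

/-- `b` can be reached from `a` by a (possibly trivial) path that is monotone in direction `w`. -/
def Reaches (G : PSLG) (w a b : Pt) : Prop := Relation.ReflTransGen (UpEdge G w) a b

theorem Reaches.dotp_le {G : PSLG} {w a b : Pt} (h : Reaches G w a b) : dotp a w ≤ dotp b w := by
  induction h with
  | refl => exact le_rfl
  | tail _ h ih => exact ih.trans h.2.le

theorem Reaches.mem {G : PSLG} {w a b : Pt} (h : Reaches G w a b) (ha : a ∈ G.V) : b ∈ G.V := by
  induction h with
  | refl => exact ha
  | tail _ h _ => exact (G.valid.1 _ _ h.1).2.1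

theorem dotp_neg (a w : Pt) : dotp a (-w) = -dotp a w := by simp [dotp]; ring

theorem UpEdge.neg {G : PSLG} {w a b : Pt} (h : UpEdge G w a b) : UpEdge G (-w) b a :=
  ⟨Sym2.eq_swap ▸ h.1, by rw [dotp_neg, dotp_neg]; exact neg_lt_neg h.2⟩

theorem Reaches.neg {G : PSLG} {w a b : Pt} (h : Reaches G w a b) : Reaches G (-w) b a := by
  induction h with
  | refl => exact Relation.ReflTransGen.refl
  | tail _ h ih => exact Relation.ReflTransGen.head h.neg ih

/-- Among the vertices reachable from `u` of height at most `k` there is a highest one. -/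
theorem Reaches.exists_highest (G : PSLG) {w u : Pt} (hu : u ∈ G.V) {k : ℝ} (hk : dotp u w ≤ k) :
    ∃ a, Reaches G w u a ∧ dotp a w ≤ k ∧
      ∀ b, Reaches G w u b → dotp b w ≤ k → dotp b w ≤ dotp a w := by
  classical
  obtain ⟨a, ha, hmax⟩ := (G.V.filter fun a => Reaches G w u a ∧ dotp a w ≤ k).exists_max_image
    (fun a => dotp a w) ⟨u, Finset.mem_filter.mpr ⟨hu, Relation.ReflTransGen.refl, hk⟩⟩
  have ha' := (Finset.mem_filter.mp ha).2
  exact ⟨a, ha'.1, ha'.2, fun b hb hbk => hmax b (Finset.mem_filter.mpr ⟨hb.mem hu, hb, hbk⟩)⟩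

/-- If the line through `p` and `r` contains `z`, at a height between those of `p` and `r`, then
`z` is on the segment from `p` to `r`. -/
theorem exists_eq_add_smul_of_crossp_eq_zero {w p r z : Pt} (hpr : dotp p w < dotp r w)
    (hz : crossp (r - p) (z - p) = 0) (h1 : dotp p w ≤ dotp z w) (h2 : dotp z w < dotp r w) :
    ∃ ρ : ℝ, 0 ≤ ρ ∧ ρ < 1 ∧ z = p + ρ • (r - p) := by
  have hd : 0 < dotp r w - dotp p w := sub_pos.mpr hpr
  refine ⟨(dotp z w - dotp p w) / (dotp r w - dotp p w), div_nonneg (by linarith) hd.le,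
    (div_lt_one hd).mpr (by linarith), ?_⟩
  obtain ⟨ρ, hρ⟩ : ∃ ρ, ρ = (dotp z w - dotp p w) / (dotp r w - dotp p w) := ⟨_, rfl⟩
  rw [← hρ]
  rw [eq_div_iff hd.ne'] at hρ
  simp only [crossp, dotp, Prod.fst_sub, Prod.snd_sub] at hz hρ
  refine Prod.ext (mul_left_cancel₀ hd.ne' ?_) (mul_left_cancel₀ hd.ne' ?_)
  · simp only [dotp, Prod.fst_add, Prod.smul_fst, Prod.fst_sub, smul_eq_mul]
    linear_combination -w.2 * hz - (r.1 - p.1) * hρ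
  · simp only [dotp, Prod.snd_add, Prod.smul_snd, Prod.snd_sub, smul_eq_mul]
    linear_combination w.1 * hz - (r.2 - p.2) * hρ

/-- Two upward edges with distinct lower endpoints do not meet below their upper endpoints. -/
theorem UpEdge.not_meet {G : PSLG} {w p r x' x : Pt} (hpr : UpEdge G w p r)
    (hx : UpEdge G w x' x) (hne : x' ≠ p) {τ : ℝ} (h0 : 0 ≤ τ) (h1 : τ < 1)
    (hz : crossp (r - p) (x' + τ • (x - x') - p) = 0)
    (hl : dotp p w ≤ dotp (x' + τ • (x - x')) w)
    (hr : dotp (x' + τ • (x - x')) w < dotp r w) : False := by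
  obtain ⟨ρ, hρ0, hρ1, hρ⟩ := exists_eq_add_smul_of_crossp_eq_zero hpr.2 hz hl hr
  have vp := G.valid.1 _ _ hpr.1
  have vx := G.valid.1 _ _ hx.1
  rcases h0.eq_or_lt with rfl | h0 <;> rcases hρ0.eq_or_lt with rfl | hρ0
  · simp at hρ; exact hne hρ
  · refine G.valid.2.1 _ _ hpr.1 _ vx.1 (mem_openSegment_iff_exists.mpr ⟨ρ, hρ0, hρ1, ?_⟩)
    simpa using hρ
  · refine G.valid.2.1 _ _ hx.1 _ vp.1 (mem_openSegment_iff_exists.mpr ⟨τ, h0, h1, ?_⟩)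
    simpa using hρ.symm
  · rcases Sym2.eq_iff.mp (G.eq_of_mem_openSegment hpr.1 hx.1
      (mem_openSegment_iff_exists.mpr ⟨ρ, hρ0, hρ1, hρ⟩)
      (mem_openSegment_iff_exists.mpr ⟨τ, h0, h1, rfl⟩)) with h | h
    · exact hne h.1.symm
    · have h1 := hpr.2
      have h2 := hx.2
      rw [h.1, h.2] at h1
      exact lt_asymm h1 h2

/-- The upper endpoint of `x' → x` and a lower point of that edge, above `p`, cannot be on
different sides of `p → r`. -/
theorem UpEdge.not_change_side {G : PSLG} {w p r x' x : Pt} {σ : ℝ} (hpr : UpEdge G w p r)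
    (hx : UpEdge G w x' x) (hne : x' ≠ p) {τ : ℝ} (h0 : 0 ≤ τ) (h1 : τ ≤ 1)
    (hl : dotp p w ≤ dotp (x' + τ • (x - x')) w) (hr : dotp x w ≤ dotp r w)
    (hpos : 0 < σ * crossp (r - p) (x - p))
    (hneg : σ * crossp (r - p) (x' + τ • (x - x') - p) ≤ 0) : False := by
  have haff : ∀ τ : ℝ, crossp (r - p) (x' + τ • (x - x') - p) =
      crossp (r - p) (x' - p) + τ * (crossp (r - p) (x - p) - crossp (r - p) (x' - p)) := by
    intro τ; simp [crossp]; ring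
  have hh : ∀ τ : ℝ, dotp (x' + τ • (x - x')) w = dotp x' w + τ * (dotp x w - dotp x' w) := by
    intro τ; simp [dotp]; ring
  have hτ1 : τ < 1 := by
    refine lt_of_le_of_ne h1 ?_
    rintro rfl
    rw [haff] at hneg
    linarith
  obtain ⟨A, hA⟩ : ∃ A, A = crossp (r - p) (x' + τ • (x - x') - p) := ⟨_, rfl⟩
  obtain ⟨B, hB⟩ : ∃ B, B = crossp (r - p) (x - p) := ⟨_, rfl⟩
  rw [← hA] at hneg
  rw [← hB] at hpos
  have hd : 0 < σ * B - σ * A := by linarith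
  set κ := (-(σ * A)) / (σ * B - σ * A) with hκ
  have hκ0 : 0 ≤ κ := div_nonneg (by linarith) hd.le
  have hκ1 : κ < 1 := (div_lt_one hd).mpr (by linarith)
  have hκe : κ * (σ * B - σ * A) = -(σ * A) := div_mul_cancel₀ _ hd.ne'
  have hx2 := hx.2
  have hττ : τ ≤ τ + κ * (1 - τ) := by nlinarith
  have hττ1 : τ + κ * (1 - τ) < 1 := by nlinarith
  refine hpr.not_meet hx hne (τ := τ + κ * (1 - τ)) (h0.trans hττ) hττ1 ?_ ?_ ?_
  · have hσ : σ ≠ 0 := by rintro rfl; simp at hpos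
    have : σ * ((1 - κ) * A + κ * B) = 0 := by linear_combination hκe
    have := (mul_eq_zero.mp this).resolve_left hσ
    rw [← this, hA, hB, haff, haff]
    ring
  · rw [hh] at hl ⊢
    nlinarith
  · rw [hh]
    nlinarith

/-- Moving down an edge `x' → x` while staying above `p`, one stays on the same side of `p → r`. -/
theorem UpEdge.same_side {G : PSLG} {w p r x' x : Pt} {σ : ℝ} (hpr : UpEdge G w p r)
    (hx : UpEdge G w x' x) (hne : x' ≠ p) (hl : dotp p w ≤ dotp x' w)
    (hr : dotp x w ≤ dotp r w) (hpos : 0 < σ * crossp (r - p) (x - p)) :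
    0 < σ * crossp (r - p) (x' - p) := by
  by_contra! hneg
  exact hpr.not_change_side hx hne le_rfl zero_le_one (by simpa using hl) hr hpos
    (by simpa using hneg)

/-- If `x` is on one side of `p → r` and `x' → x` ends below `p`, then `p` is on the other side
of `x' → x`. -/
theorem UpEdge.opposite_side {G : PSLG} {w p r x' x : Pt} {σ : ℝ} (hpr : UpEdge G w p r)
    (hx : UpEdge G w x' x) (hne : x' ≠ p) (hl : dotp x' w ≤ dotp p w) (hpx : dotp p w ≤ dotp x w)
    (hr : dotp x w ≤ dotp r w) (hpos : 0 < σ * crossp (r - p) (x - p)) :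
    0 < -σ * crossp (x - x') (p - x') := by
  by_contra! hneg
  have hd : 0 < dotp x w - dotp x' w := sub_pos.mpr hx.2
  set τ := (dotp p w - dotp x' w) / (dotp x w - dotp x' w) with hτ
  have hτ0 : 0 ≤ τ := div_nonneg (by linarith) hd.le
  have hτ1 : τ ≤ 1 := (div_le_one hd).mpr (by linarith)
  have hτe : τ * (dotp x w - dotp x' w) = dotp p w - dotp x' w := div_mul_cancel₀ _ hd.ne'
  have hh : dotp (x' + τ • (x - x')) w = dotp p w := by
    have : dotp (x' + τ • (x - x')) w = dotp x' w + τ * (dotp x w - dotp x' w) := by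
      simp [dotp]; ring
    rw [this, hτe]; ring
  refine hpr.not_change_side hx hne hτ0 hτ1 hh.ge hr hpos ?_
  have hid : crossp (r - p) (x' + τ • (x - x') - p) * (dotp x w - dotp x' w) =
      - crossp (x - x') (p - x') * (dotp r w - dotp p w) := by
    simp [dotp, crossp] at hτe ⊢
    linear_combination ((r.1 - p.1) * (x.2 - x'.2) - (r.2 - p.2) * (x.1 - x'.1)) * hτe
  have hpr2 := sub_pos.mpr hpr.2
  by_contra! hcon
  have h1 := mul_pos hcon hd
  have h2 : σ * crossp (r - p) (x' + τ • (x - x') - p) * (dotp x w - dotp x' w) =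
      (-σ * crossp (x - x') (p - x')) * (dotp r w - dotp p w) := by
    linear_combination σ * hid
  have h3 := mul_nonpos_of_nonpos_of_nonneg hneg hpr2.le
  linarith

/-- At the height of `q`, the point `q` is strictly on the side given by the sign of `σ` of an
edge of a path that starts at `u` and is monotone in direction `w`. -/
def BesidePath (G : PSLG) (w : Pt) (σ : ℝ) (u q : Pt) : Prop :=
  ∃ a b, Reaches G w u a ∧ UpEdge G w a b ∧ dotp a w ≤ dotp q w ∧ dotp q w < dotp b w ∧
    0 < σ * crossp (b - a) (q - a)

theorem Reaches.beside_of_left {G : PSLG} {w u a q' q : Pt} {σ : ℝ} (ha : Reaches G w u a)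
    (hq : UpEdge G w q' q) (hlow : dotp q' w < dotp a w) (hhigh : dotp a w ≤ dotp q w)
    (hside : 0 < -σ * crossp (q - q') (a - q')) (hno : ¬ Reaches G w u q') :
    (dotp q' w < dotp u w ∧ 0 < -σ * crossp (q - q') (u - q')) ∨
      (dotp u w ≤ dotp q' w ∧ BesidePath G w σ u q') := by
  induction ha with
  | refl => exact Or.inl ⟨hlow, hside⟩
  | @tail a' a ha' hstep ih =>
    have hne : a' ≠ q' := by rintro rfl; exact hno ha'
    rcases lt_or_ge (dotp q' w) (dotp a' w) with h | h
    · exact ih h (hstep.2.le.trans hhigh) (hq.same_side hstep hne h.le hhigh hside)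
    · refine Or.inr ⟨(Reaches.dotp_le ha').trans h, a', a, ha', hstep, h, hlow, ?_⟩
      simpa using hq.opposite_side hstep hne h hlow.le hhigh hside

/-- Walking down an edge from a point beside the paths from `u`, one stays beside them, on the
same side, until one passes `u`, on that side. -/
theorem BesidePath.descend {G : PSLG} {w u q' q : Pt} {σ : ℝ} (h : BesidePath G w σ u q)
    (hq : UpEdge G w q' q) (hno : ¬ Reaches G w u q') :
    (dotp q' w < dotp u w ∧ 0 < -σ * crossp (q - q') (u - q')) ∨
      (dotp u w ≤ dotp q' w ∧ BesidePath G w σ u q') := by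
  obtain ⟨a, b, ha, hab, h1, h2, h3⟩ := h
  have hne : q' ≠ a := by rintro rfl; exact hno ha
  rcases lt_or_ge (dotp q' w) (dotp a w) with hlt | hge
  · exact ha.beside_of_left hq hlt h1 (hab.opposite_side hq hne hlt.le h1 h2.le h3) hno
  · exact Or.inr ⟨ha.dotp_le.trans hge, a, b, ha, hab, hge, hq.2.trans h2,
      hab.same_side hq hne hge h2.le h3⟩

/-- A vertex that is not reachable from `u` cannot be on both sides of the paths from `u`. -/
theorem BesidePath.not_both {G : PSLG} (htri : G.IsTriangulation) (hgen : NoThreeCollinear G.V)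
    {w u v : Pt} (hv : v ∈ G.V) (huv : dotp u w ≤ dotp v w) (hno : ¬ Reaches G w u v)
    (hlow : ∃ y ∈ G.V, dotp y w < dotp u w) (h1 : BesidePath G w 1 u v)
    (h2 : BesidePath G w (-1) u v) : False := by
  classical
  obtain ⟨y, hy, hyu⟩ := hlow
  obtain ⟨q, hq, hmin⟩ := (G.V.filter fun q => Reaches G w q v ∧ dotp u w ≤ dotp q w ∧
    BesidePath G w 1 u q ∧ BesidePath G w (-1) u q).exists_min_image (fun q => dotp q w)
      ⟨v, Finset.mem_filter.mpr ⟨hv, Relation.ReflTransGen.refl, huv, h1, h2⟩⟩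
  obtain ⟨hqV, hqv, huq, hq1, hq2⟩ := Finset.mem_filter.mp hq
  obtain ⟨q', hq'⟩ := htri.exists_upEdge hgen (w := -w) hqV hy
    (by rw [dotp_neg, dotp_neg]; linarith)
  have hq'q : UpEdge G w q' q := by simpa using hq'.neg
  have hq'v : Reaches G w q' v := Relation.ReflTransGen.head hq'q hqv
  have hnoq : ¬ Reaches G w u q' := fun h => hno (h.trans hq'v)
  rcases hq1.descend hq'q hnoq with ⟨h, h3⟩ | ⟨h, h3⟩ <;>
    rcases hq2.descend hq'q hnoq with ⟨h', h4⟩ | ⟨h', h4⟩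
  · linarith
  · linarith
  · linarith
  · have := hmin q' (Finset.mem_filter.mpr ⟨(G.valid.1 _ _ hq'q.1).1, hq'v, h, h3, h4⟩)
    exact absurd hq'q.2 (not_lt.mpr this)

/-- A vertex above `u` that is neither highest nor reachable from `u` is beside some path
from `u`. -/
theorem PSLG.IsTriangulation.besidePath_or {G : PSLG} (htri : G.IsTriangulation)
    (hgen : NoThreeCollinear G.V) {w u v : Pt} (hu : u ∈ G.V) (hv : v ∈ G.V)
    (huv : dotp u w ≤ dotp v w) (hno : ¬ Reaches G w u v)
    (hhigh : ∃ y ∈ G.V, dotp v w < dotp y w) :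
    BesidePath G w 1 u v ∨ BesidePath G w (-1) u v := by
  obtain ⟨y, hy, hvy⟩ := hhigh
  obtain ⟨a, ha, hav, hmax⟩ := Reaches.exists_highest G hu huv
  obtain ⟨b, hb⟩ := htri.exists_upEdge hgen (ha.mem hu) hy (hav.trans_lt hvy)
  have hvb : dotp v w < dotp b w := by
    by_contra! h
    exact absurd hb.2 (not_lt.mpr (hmax b (ha.tail hb) h))
  rcases lt_trichotomy (crossp (b - a) (v - a)) 0 with h | h | h
  · exact Or.inr ⟨a, b, ha, hb, hav, hvb, by linarith⟩
  · exfalso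
    obtain ⟨ρ, h0, h1, hρ⟩ := exists_eq_add_smul_of_crossp_eq_zero hb.2 h hav hvb
    rcases h0.eq_or_lt with rfl | h0
    · exact hno (by simpa [hρ] using ha)
    · exact G.valid.2.1 _ _ hb.1 v hv (mem_openSegment_iff_exists.mpr ⟨ρ, h0, h1, hρ⟩)
  · exact Or.inl ⟨a, b, ha, hb, hav, hvb, by linarith⟩

@[fun_prop]
theorem continuous_dotp_right (a : Pt) : Continuous fun w => dotp a w := by
  unfold dotp; fun_prop

theorem dotp_eventually_lt {a b w : Pt} (h : dotp a w < dotp b w) :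
    ∀ᶠ w' in nhds w, dotp a w' < dotp b w' :=
  (isOpen_lt (continuous_dotp_right a) (continuous_dotp_right b)).mem_nhds h

theorem UpEdge.eventually {G : PSLG} {w a b : Pt} (h : UpEdge G w a b) :
    ∀ᶠ w' in nhds w, UpEdge G w' a b :=
  (dotp_eventually_lt h.2).mono fun _ h' => ⟨h.1, h'⟩

theorem Reaches.eventually {G : PSLG} {w a b : Pt} (h : Reaches G w a b) :
    ∀ᶠ w' in nhds w, Reaches G w' a b := by
  induction h with
  | refl => exact Filter.Eventually.of_forall fun _ => Relation.ReflTransGen.refl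
  | tail _ h ih =>
    filter_upwards [ih, UpEdge.eventually h] with w' h1 h2 using h1.tail h2

theorem BesidePath.eventually {G : PSLG} {w u q : Pt} {σ : ℝ} (h : BesidePath G w σ u q)
    (huq : dotp u w < dotp q w) : ∀ᶠ w' in nhds w, BesidePath G w' σ u q := by
  obtain ⟨a, b, ha, hab, h1, h2, h3⟩ := h
  rcases h1.lt_or_eq with h1 | h1
  · filter_upwards [ha.eventually, hab.eventually, dotp_eventually_lt h1, dotp_eventually_lt h2]
      with w' ha hab h1 h2 using ⟨a, b, ha, hab, h1.le, h2, h3⟩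
  · rcases Relation.ReflTransGen.cases_tail ha with rfl | ⟨a', ha', hstep⟩
    · exact absurd huq h1.not_lt
    have hstep' : UpEdge G w a' a := hstep
    have h4 : 0 < σ * crossp (a - a') (q - a') := by
      have hid : crossp (b - a) (q - a) * (dotp a w - dotp a' w) =
          crossp (a - a') (q - a') * (dotp b w - dotp a w) := by
        simp [crossp, dotp] at h1 ⊢
        linear_combination -((b.1 - a.1) * (a.2 - a'.2) - (b.2 - a.2) * (a.1 - a'.1)) * h1
      have h5 : σ * crossp (b - a) (q - a) * (dotp a w - dotp a' w) =
          σ * crossp (a - a') (q - a') * (dotp b w - dotp a w) := by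
        linear_combination σ * hid
      have h6 := mul_pos h3 (sub_pos.mpr hstep'.2)
      rw [h5] at h6
      exact pos_of_mul_pos_left h6 (sub_pos.mpr hab.2).le
    filter_upwards [Reaches.eventually ha', ha.eventually, hab.eventually, hstep'.eventually,
      dotp_eventually_lt (h1 ▸ hstep'.2), dotp_eventually_lt h2] with w' ha' ha hab hs h5 h2
    rcases le_or_gt (dotp a w') (dotp q w') with h | h
    · exact ⟨a, b, ha, hab, h, h2, h3⟩
    · exact ⟨a', a, ha', hs, h5.le, h, h4⟩

/-- If `v` is highest in direction `w`, possibly tied, and `u` is lower, then `v` can be reached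
from `u` in some direction. -/
theorem PSLG.IsTriangulation.exists_reaches_of_highest {G : PSLG} (htri : G.IsTriangulation)
    (hgen : NoThreeCollinear G.V) {w u v : Pt} (hu : u ∈ G.V) (hv : v ∈ G.V)
    (huv : dotp u w < dotp v w) (hmax : ∀ x ∈ G.V, dotp x w ≤ dotp v w) :
    ∃ w', Reaches G w' u v := by
  suffices h : ∃ w', ∀ x ∈ G.V, x ≠ v → dotp x w' < dotp v w' by
    obtain ⟨w', hw'⟩ := h
    have huv' : dotp u w' < dotp v w' := hw' u hu (by rintro rfl; exact lt_irrefl _ huv)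
    obtain ⟨a, ha, -, hamax⟩ := Reaches.exists_highest G hu huv'.le
    refine ⟨w', ?_⟩
    by_cases hav : a = v
    · exact hav ▸ ha
    obtain ⟨b, hb⟩ := htri.exists_upEdge hgen (ha.mem hu) hv (hw' a (ha.mem hu) hav)
    have hbV := Reaches.mem (ha.tail hb) hu
    have hbv : dotp b w' ≤ dotp v w' := by
      by_cases hbv : b = v
      · rw [hbv]
      · exact (hw' b hbV hbv).le
    exact absurd hb.2 (not_lt.mpr (hamax b (ha.tail hb) hbv))
  by_cases htie : ∃ t ∈ G.V, t ≠ v ∧ dotp t w = dotp v w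
  swap
  · push Not at htie
    exact ⟨w, fun x hx hxv => lt_of_le_of_ne (hmax x hx) (htie x hx hxv)⟩
  obtain ⟨t, ht, htv, htw⟩ := htie
  have hlim : Filter.Tendsto (fun ε : ℝ => w + ε • (v - t)) (nhdsWithin 0 (Set.Ioi 0))
      (nhds w) := by
    have : Continuous fun ε : ℝ => w + ε • (v - t) := by fun_prop
    simpa using (this.tendsto 0).mono_left nhdsWithin_le_nhds
  have hev : ∀ᶠ ε in nhdsWithin (0 : ℝ) (Set.Ioi 0), ∀ x ∈ G.V, x ≠ v →
      dotp x (w + ε • (v - t)) < dotp v (w + ε • (v - t)) := by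
    rw [Filter.eventually_all_finset]
    intro x hx
    rcases (hmax x hx).lt_or_eq with hlt | heq
    · exact (hlim.eventually (dotp_eventually_lt hlt)).mono fun _ h _ => h
    by_cases hxv : x = v
    · exact Filter.Eventually.of_forall fun _ h => absurd hxv h
    have hxt : x = t := by
      by_contra hxt
      refine hgen.crossp_ne_zero hv ht hx htv.symm (Ne.symm hxv) (Ne.symm hxt) ?_
      have h1 : crossp (t - v) (x - v) * (dotp v w - dotp u w) = 0 := by
        simp only [crossp, dotp, Prod.fst_sub, Prod.snd_sub] at htw heq ⊢
        linear_combination -((x.1 - v.1) * (v.2 - u.2) - (x.2 - v.2) * (v.1 - u.1)) * htw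
          + ((t.1 - v.1) * (v.2 - u.2) - (t.2 - v.2) * (v.1 - u.1)) * heq
      exact (mul_eq_zero.mp h1).resolve_right (sub_pos.mpr huv).ne'
    subst hxt
    filter_upwards [self_mem_nhdsWithin] with ε hε _
    have hε : 0 < ε := hε
    have hpos : 0 < (v.1 - x.1) ^ 2 + (v.2 - x.2) ^ 2 := by
      by_contra hcon
      have h1 : v.1 - x.1 = 0 := by nlinarith [sq_nonneg (v.1 - x.1), sq_nonneg (v.2 - x.2)]
      have h2 : v.2 - x.2 = 0 := by nlinarith [sq_nonneg (v.1 - x.1), sq_nonneg (v.2 - x.2)]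
      exact htv (Prod.ext (by linarith) (by linarith))
    have h1 : dotp v (w + ε • (v - x)) - dotp x (w + ε • (v - x)) =
        ε * ((v.1 - x.1) ^ 2 + (v.2 - x.2) ^ 2) := by
      simp [dotp] at heq ⊢
      linear_combination -heq
    have h2 := mul_pos hε hpos
    linarith
  obtain ⟨ε, hε⟩ := hev.exists
  exact ⟨_, hε⟩

theorem dotp_self_pos {d : Pt} (hd : d ≠ 0) : 0 < dotp d d := by
  by_contra hcon
  simp only [dotp] at hcon
  have h1 : d.1 = 0 := by nlinarith [mul_self_nonneg d.1, mul_self_nonneg d.2]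
  have h2 : d.2 = 0 := by nlinarith [mul_self_nonneg d.1, mul_self_nonneg d.2]
  exact hd (Prod.ext h1 h2)

/-- In a triangulation, every vertex can be reached from every other one by a path that is
monotone in some direction. -/
theorem PSLG.IsTriangulation.exists_reaches {G : PSLG} (htri : G.IsTriangulation)
    (hgen : NoThreeCollinear G.V) {u v : Pt} (hu : u ∈ G.V) (hv : v ∈ G.V) (huv : u ≠ v) :
    ∃ w, Reaches G w u v := by
  by_contra! hno
  have hd0 : 0 < dotp (v - u) (v - u) := dotp_self_pos (sub_ne_zero.mpr huv.symm)
  set n : Pt := (-(v - u).2, (v - u).1) with hn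
  set W : ℝ → Pt := fun t => t • n + (v - u) with hW
  have hWcont : Continuous W := by fun_prop
  have hWdot : ∀ t x y, dotp y (W t) - dotp x (W t) =
      t * (dotp y n - dotp x n) + (dotp y (v - u) - dotp x (v - u)) := by
    intro t x y; simp [dotp, hW]; ring
  have hvn : dotp v n = dotp u n := by simp [dotp, hn]; ring
  have hlt : ∀ t, dotp u (W t) < dotp v (W t) := by
    intro t
    have h := hWdot t u v
    rw [hvn, sub_self, mul_zero, zero_add] at h
    rw [dotp_sub v u] at hd0
    linarith
  have hE : s(u, v) ∉ G.E := fun hE =>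
    hno (v - u) (Relation.ReflTransGen.single ⟨hE, by rw [dotp_sub v u] at hd0; linarith⟩)
  have hcn : ∀ x, crossp (v - u) (x - u) = dotp x n - dotp u n := by
    intro x; simp [crossp, dotp, hn]; ring
  obtain ⟨⟨b, hb⟩, ⟨b', hb'⟩⟩ : (∃ b, UpEdge G n u b) ∧ ∃ b', UpEdge G (-n) u b' := by
    obtain ⟨c, e, m, hce, h1, h2⟩ := htri.exists_crossing hgen hu hv huv hE
    obtain ⟨hc, he, -⟩ := G.valid.1 c e hce
    have hs := G.crossp_sides hgen hu hv huv hE hce h1 h2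
    rw [hcn, hcn] at hs
    rcases hs with ⟨h1, h2⟩ | ⟨h1, h2⟩
    · exact ⟨htri.exists_upEdge hgen hu hc (by linarith),
        htri.exists_upEdge hgen hu he (by rw [dotp_neg, dotp_neg]; linarith)⟩
    · exact ⟨htri.exists_upEdge hgen hu he (by linarith),
        htri.exists_upEdge hgen hu hc (by rw [dotp_neg, dotp_neg]; linarith)⟩
  have hlow : ∀ t, ∃ y ∈ G.V, dotp y (W t) < dotp u (W t) := by
    intro t
    by_contra! hcon
    obtain ⟨w, hw⟩ := htri.exists_reaches_of_highest hgen (w := -W t) hv hu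
      (by rw [dotp_neg, dotp_neg]; exact neg_lt_neg (hlt t))
      (fun x hx => by rw [dotp_neg, dotp_neg]; exact neg_le_neg (hcon x hx))
    exact hno _ hw.neg
  have hhigh : ∀ t, ∃ y ∈ G.V, dotp v (W t) < dotp y (W t) := by
    intro t
    by_contra! hcon
    obtain ⟨w, hw⟩ := htri.exists_reaches_of_highest hgen hu hv (hlt t) hcon
    exact hno _ hw
  have hopen : ∀ σ, IsOpen {t | BesidePath G (W t) σ u v} := by
    intro σ
    rw [isOpen_iff_mem_nhds]
    intro t ht
    exact hWcont.continuousAt.eventually (BesidePath.eventually ht (hlt t))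
  have hnonempty : ∀ {σ : ℝ} {b : Pt}, s(u, b) ∈ G.E → 0 < -σ * (dotp b n - dotp u n) →
      ∃ t, BesidePath G (W t) σ u v := by
    intro σ b hub hσ
    have hg : dotp b n - dotp v n ≠ 0 := by
      rw [hvn]; intro h; rw [h] at hσ; simp at hσ
    obtain ⟨t, ht⟩ : ∃ t, t * (dotp b n - dotp v n) = 1 - (dotp b (v - u) - dotp v (v - u)) :=
      ⟨_, div_mul_cancel₀ _ hg⟩
    have hvb : dotp v (W t) < dotp b (W t) := by
      have := hWdot t v b
      linarith
    refine ⟨t, u, b, Relation.ReflTransGen.refl, ⟨hub, (hlt t).trans hvb⟩, (hlt t).le, hvb, ?_⟩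
    rw [← hcn] at hσ
    have : crossp (b - u) (v - u) = - crossp (v - u) (b - u) := by simp [crossp]; ring
    rw [this]
    linarith
  obtain ⟨t₁, h₁⟩ := hnonempty (σ := 1) hb'.1 (by
    have := hb'.2; rw [dotp_neg, dotp_neg] at this; linarith)
  obtain ⟨t₂, h₂⟩ := hnonempty (σ := -1) hb.1 (by have := hb.2; linarith)
  obtain ⟨t, -, ht₁, ht₂⟩ := isPreconnected_univ _ _ (hopen 1) (hopen (-1))
    (fun t _ => htri.besidePath_or hgen hu hv (hlt t).le (hno _) (hhigh t))
    ⟨t₁, trivial, h₁⟩ ⟨t₂, trivial, h₂⟩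
  exact BesidePath.not_both htri hgen hv (hlt t).le (hno _) (hlow t) ht₁ ht₂

theorem Reaches.exists_isMonotonePath {G : PSLG} {w u v : Pt} (h : Reaches G w u v)
    (huv : u ≠ v) :
    ∃ L, IsMonotonePath G L ∧ L.head? = some u ∧ L.getLast? = some v := by
  obtain ⟨l, hl, hlast⟩ := List.exists_isChain_cons_of_relationReflTransGen h
  have hw : w ≠ 0 := by
    rintro rfl
    rcases Relation.ReflTransGen.cases_head h with rfl | ⟨c, hc, -⟩
    · exact huv rfl
    · have := hc.2; simp [dotp] at this
  refine ⟨u :: l, ⟨⟨?_, hl.imp fun _ _ h => h.1⟩, w, hw, hl.imp fun a b h => ?_⟩, rfl, ?_⟩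
  · cases l with
    | nil => exact absurd hlast huv
    | cons => simp
  · rw [dotp_sub]; exact sub_pos.mpr h.2
  · rw [List.getLast?_eq_some_getLast (List.cons_ne_nil _ _), hlast]

theorem IsPathIn.mem {G : PSLG} {L : List Pt} (h : IsPathIn G L) : ∀ x ∈ L, x ∈ G.V := by
  obtain ⟨hlen, hchain⟩ := h
  match L, hlen, hchain with
  | a :: b :: l, h2, hchain =>
    clear h2
    induction l generalizing a b with
    | nil =>
      have := G.valid.1 a b (List.isChain_cons_cons.mp hchain).1
      simp [this.1, this.2.1]
    | cons c l ih =>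
      obtain ⟨h1, h2⟩ := List.isChain_cons_cons.mp hchain
      intro x hx
      rcases List.mem_cons.mp hx with rfl | hx
      · exact (G.valid.1 _ _ h1).1
      · exact ih b c h2 x hx

theorem IsMonotonePath.nodup {G : PSLG} {L : List Pt} (h : IsMonotonePath G L) : L.Nodup := by
  obtain ⟨-, w, -, hmon⟩ := h
  have hchain : (L.map fun a => dotp a w).IsChain (· < ·) := by
    rw [List.isChain_map]
    exact List.IsChain.imp (fun a b h => by rw [dotp_sub] at h; exact sub_pos.mp h) hmon
  exact List.Nodup.of_map _ (hchain.pairwise.imp fun h => h.ne)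

theorem finite_setOf_isMonotonePath (G : PSLG) : {L : List Pt | IsMonotonePath G L}.Finite := by
  refine ((List.finite_length_le G.V G.V.card).image (List.map Subtype.val)).subset ?_
  intro L hL
  refine ⟨L.attach.map fun x => ⟨x.1, hL.1.mem x.1 x.2⟩, ?_, ?_⟩
  · classical
    have h1 : L.toFinset ⊆ G.V := fun x hx => hL.1.mem x (List.mem_toFinset.mp hx)
    have h2 := Finset.card_le_card h1
    rw [List.toFinset_card_of_nodup hL.nodup] at h2
    simpa using h2
  · rw [List.map_map]
    exact L.attach_map_subtype_val

/-- in a triangulation of `n ≥ 3` points (no three collinear), every pair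
of distinct points is connected by a monotone path; hence there are at least
`n(n−1)/2` monotone paths. -/
theorem monotone_paths_connect (G : PSLG)
    (hcard : 3 ≤ G.V.card) (hgen : NoThreeCollinear G.V)
    (htri : G.IsTriangulation) :
    (∀ u ∈ G.V, ∀ v ∈ G.V, u ≠ v →
      ∃ L : List Pt, IsMonotonePath G L ∧
        ((L.head? = some u ∧ L.getLast? = some v) ∨
         (L.head? = some v ∧ L.getLast? = some u))) ∧
    G.V.card * (G.V.card - 1) / 2 ≤ monPathCount G := by
  have hpair : ∀ u ∈ G.V, ∀ v ∈ G.V, u ≠ v →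
      ∃ L : List Pt, IsMonotonePath G L ∧ L.head? = some u ∧ L.getLast? = some v := by
    intro u hu v hv huv
    obtain ⟨w, hw⟩ := htri.exists_reaches hgen hu hv huv
    exact hw.exists_isMonotonePath huv
  refine ⟨fun u hu v hv huv => ?_, ?_⟩
  · obtain ⟨L, hL, hends⟩ := hpair u hu v hv huv
    exact ⟨L, hL, Or.inl hends⟩
  classical
  have hsym : ∀ e ∈ G.V.offDiag.image Sym2.mk.uncurry, ∃ L : List Pt, IsMonotonePath G L ∧
      s(L.head?, L.getLast?) = e.map some := by
    intro e he
    obtain ⟨⟨u, v⟩, huv, rfl⟩ := Finset.mem_image.mp he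
    obtain ⟨hu, hv, hne⟩ := Finset.mem_offDiag.mp huv
    obtain ⟨L, hL, h1, h2⟩ := hpair u hu v hv hne
    exact ⟨L, hL, by rw [h1, h2]; rfl⟩
  choose! f hf using hsym
  have hfin : {P : Set (List Pt) | ∃ L, IsMonotonePath G L ∧ P = {L, L.reverse}}.Finite :=
    ((finite_setOf_isMonotonePath G).image fun L => {L, L.reverse}).subset
      fun P ⟨L, hL, hP⟩ => ⟨L, hL, hP.symm⟩
  have hinj : Set.InjOn (fun e => ({f e, (f e).reverse} : Set (List Pt)))
      (G.V.offDiag.image Sym2.mk.uncurry : Finset (Sym2 Pt)) := by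
    intro e he e' he' h
    have hmem : f e ∈ ({f e', (f e').reverse} : Set (List Pt)) :=
      Set.ext_iff.mp h (f e) |>.mp (Set.mem_insert _ _)
    apply Sym2.map.injective (Option.some_injective Pt)
    rw [← (hf e he).2, ← (hf e' he').2]
    rcases hmem with h | h
    · rw [h]
    · rw [Set.mem_singleton_iff.mp h, List.head?_reverse, List.getLast?_reverse, Sym2.eq_swap]
  have hle := Set.ncard_le_ncard_of_injOn _
    (fun e he => show _ ∈ {P : Set (List Pt) | ∃ L, IsMonotonePath G L ∧ P = {L, L.reverse}} from
      ⟨f e, (hf e he).1, rfl⟩) hinj hfin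
  rwa [Set.ncard_coe_finset, Sym2.card_image_offDiag, Nat.choose_two_right] at hle

end
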